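/- The X₂^{(1)}-Hermite polynomials H⁽¹⁾_n := Wr(H₁,H₂,H_n) satisfy: (i) for every odd natural n ≥ 3 and all z, H⁽¹⁾_n(z) = ((−1)^{(n+1)/2}·8·n!·2^{(n+1)/2} / ∏_{j=1}^{(n−3)/2}(n − 2(1+j) + 1))·ν_n(z); (ii) for every even natural n ≥ 4 and all z, H⁽¹⁾_n(z) = ((−1)^{(n+2)/2}·8·n!·2^{n/2} / (n·∏_{j=1}^{(n−4)/2}(n − 2(1+j))))·μ_n(z); (iii) H⁽¹⁾_0(z) = 16·μ_0(z) for all z. -/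

import Mathlib

/-- Physicists' Hermite polynomials via the Rodrigues formula (complex version). -/
noncomputable def Hc (n : ℕ) (z : ℂ) : ℂ :=
  (-1) ^ n * Complex.exp (z ^ 2) * iteratedDeriv n (fun t => Complex.exp (-t ^ 2)) z

/-- The function Ĥₙ. -/
noncomputable def Hhatc (n : ℕ) (z : ℂ) : ℂ :=
  Hc n z + 4 * (n : ℂ) * Hc (n - 2) z + 4 * (n : ℂ) * ((n : ℂ) - 3) * Hc (n - 4) z

/-- Even coefficients c_{2k}(n) of the generalized power series. -/
noncomputable def ceven (n k : ℕ) : ℂ :=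
  if k = 0 then 1
  else if k = 1 then -(n : ℂ)
  else (-1) ^ k * 2 ^ k * (n : ℂ) * ((n : ℂ) - ((2 * (k : ℂ) - 1) ^ 2 + 1)) *
    (∏ j ∈ Finset.Icc 1 (k - 2), ((n : ℂ) - 2 * (1 + (j : ℂ)))) /
      (Nat.factorial (2 * k) : ℂ)

/-- Odd coefficients: `codd n k` is c_{2k-1}(n), for k ≥ 1. -/
noncomputable def codd (n k : ℕ) : ℂ :=
  if k ≤ 1 then 1
  else (-1) ^ (k + 1) * 2 ^ (k - 1) * ((n : ℂ) - ((2 * ((k : ℂ) - 1)) ^ 2 + 1)) *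
    (∏ j ∈ Finset.Icc 1 (k - 2), ((n : ℂ) - (2 * (1 + (j : ℂ)) - 1))) /
      (Nat.factorial (2 * k - 1) : ℂ)

/-- μₙ(z) = Σ_{k≥0} c_{2k}(n)·z^{2k}. -/
noncomputable def muF (n : ℕ) (z : ℂ) : ℂ := ∑' k : ℕ, ceven n k * z ^ (2 * k)

/-- νₙ(z) = Σ_{k≥1} c_{2k-1}(n)·z^{2k-1}. -/
noncomputable def nuF (n : ℕ) (z : ℂ) : ℂ := ∑' k : ℕ, codd n (k + 1) * z ^ (2 * k + 1)

/-- βₙ = μₙ + νₙ. -/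
noncomputable def betaF (n : ℕ) (z : ℂ) : ℂ := muF n z + nuF n z

/-- Wronskian of three complex functions. -/
noncomputable def Wrc (f g h : ℂ → ℂ) (z : ℂ) : ℂ :=
  Matrix.det !![f z, g z, h z;
                deriv f z, deriv g z, deriv h z;
                deriv (deriv f) z, deriv (deriv g) z, deriv (deriv h) z]

/-- The X₂⁽¹⁾-Hermite polynomials. -/
noncomputable def H1exc (n : ℕ) (z : ℂ) : ℂ := Wrc (Hc 1) (Hc 2) (Hc n) z

/-!
The polynomial `H_n` solves Hermite's equation `p'' = 2 x p' - 2 n p`. Expanding the Wronskian along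
its last column gives `Wr(H₁, H₂, p) = 16 p - 16 x p' + (8 x² + 4) p''`, and for a solution `p` the
term `4 p''` can be eliminated, leaving a polynomial in the Euler operator `x d/dx`. Hence the
Wronskian acts diagonally on coefficients, multiplying the `i`-th one by `-8 (n - ((i - 1)² + 1))`.
Solving the two-step recursion for the coefficients of `H_n` identifies the even and odd parts of
the Wronskian with multiples of `μ_n` and `ν_n`, for every `n`:
`H⁽¹⁾_n = -8 (n - 2) H_n(0) μ_n - 8 (n - 1) H_n'(0) ν_n`.
For `n` of given parity one of `H_n(0)`, `H_n'(0)` vanishes and the other is classical.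
-/

open Polynomial

section HermiteEquation

variable {R : Type*} [CommRing R] {a : R} {p : R[X]}

/-- Polynomial solutions of Hermite's differential equation `p'' = 2 x p' - 2 a p`. -/
def IsHermiteSolution (a : R) (p : R[X]) : Prop :=
  derivative (derivative p) = 2 * (X * derivative p) - 2 * (C a * p)

lemma coeff_X_mul_derivative (p : R[X]) (i : ℕ) : (X * derivative p).coeff i = i * p.coeff i := by
  cases i with
  | zero => simp
  | succ i => rw [coeff_X_mul, coeff_derivative, mul_comm, Nat.cast_succ]

lemma IsHermiteSolution.coeff_add_two (hp : IsHermiteSolution a p) (i : ℕ) :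
    (i + 2) * (i + 1) * p.coeff (i + 2) = -2 * (a - i) * p.coeff i := by
  have hcoeff := congrArg (coeff · i) hp
  simp only [coeff_derivative, coeff_sub, coeff_ofNat_mul, coeff_C_mul,
    coeff_X_mul_derivative] at hcoeff
  push_cast at hcoeff
  linear_combination hcoeff

lemma IsHermiteSolution.factorial_mul_coeff (hp : IsHermiteSolution a p) (r k : ℕ) :
    ((2 * k + r).factorial : R) * p.coeff (2 * k + r) =
      (-2) ^ k * (∏ j ∈ Finset.range k, (a - (2 * j + r))) * (r.factorial * p.coeff r) := by
  induction k with
  | zero => simp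
  | succ k ih =>
    have hrec := hp.coeff_add_two (2 * k + r)
    rw [show 2 * (k + 1) + r = 2 * k + r + 2 by ring, Finset.prod_range_succ,
      Nat.factorial_succ, Nat.factorial_succ]
    push_cast at hrec ⊢
    linear_combination ((2 * k + r).factorial : R) * hrec - 2 * (a - (2 * k + r)) * ih

end HermiteEquation

section PhysHermite

variable (R : Type*) [CommRing R]

/-- The physicists' Hermite polynomials over `R`, generated by the raising operator `2 x - d/dx`
that the Rodrigues formula induces. -/
noncomputable def physHermite : ℕ → R[X]
  | 0 => 1
  | n + 1 => 2 * (X * physHermite n) - derivative (physHermite n)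

lemma physHermite_zero : physHermite R 0 = 1 := rfl

lemma physHermite_succ (n : ℕ) :
    physHermite R (n + 1) = 2 * (X * physHermite R n) - derivative (physHermite R n) := rfl

lemma physHermite_one : physHermite R 1 = 2 * X := by
  simp [physHermite_succ, physHermite_zero]

lemma physHermite_two : physHermite R 2 = 4 * X ^ 2 - 2 := by
  simp only [physHermite_succ R 1, physHermite_one, derivative_mul, derivative_ofNat, derivative_X]
  ring

lemma derivative_physHermite_succ (n : ℕ) :
    derivative (physHermite R (n + 1)) = 2 * ((n : R[X]) + 1) * physHermite R n := by
  induction n with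
  | zero => simp [physHermite_one, physHermite_zero]
  | succ n ih =>
    rw [physHermite_succ R (n + 1), ih]
    simp only [derivative_sub, derivative_mul, derivative_ofNat, derivative_X, derivative_add,
      derivative_natCast, derivative_one, ih]
    push_cast
    linear_combination (-2 * ((n : R[X]) + 1)) * physHermite_succ R n

lemma isHermiteSolution_physHermite (n : ℕ) :
    IsHermiteSolution (n : R) (physHermite R n) := by
  have hderiv := derivative_physHermite_succ R n
  simp only [physHermite_succ, derivative_sub, derivative_mul, derivative_ofNat,
    derivative_X] at hderiv
  rw [IsHermiteSolution, C_eq_natCast]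
  linear_combination -hderiv

lemma coeff_zero_physHermite_add_two (n : ℕ) :
    (physHermite R (n + 2)).coeff 0 = -2 * (n + 1) * (physHermite R n).coeff 0 := by
  rw [physHermite_succ R (n + 1), derivative_physHermite_succ]
  simp [mul_coeff_zero]

lemma coeff_one_physHermite_succ (n : ℕ) :
    (physHermite R (n + 1)).coeff 1 = 2 * (n + 1) * (physHermite R n).coeff 0 := by
  have hcoeff := congrArg (coeff · 0) (derivative_physHermite_succ R n)
  simpa [mul_coeff_zero, coeff_derivative] using hcoeff

lemma factorial_mul_coeff_zero_physHermite_two_mul (m : ℕ) :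
    (m.factorial : R) * (physHermite R (2 * m)).coeff 0 = (-1) ^ m * (2 * m).factorial := by
  induction m with
  | zero => simp [physHermite_zero]
  | succ m ih =>
    rw [show 2 * (m + 1) = 2 * m + 2 by ring, coeff_zero_physHermite_add_two,
      Nat.factorial_succ m, Nat.factorial_succ, Nat.factorial_succ]
    push_cast
    linear_combination (-2 * (2 * (m : R) + 1) * (m + 1)) * ih

lemma coeff_zero_physHermite_two_mul_add_one (m : ℕ) :
    (physHermite R (2 * m + 1)).coeff 0 = 0 := by
  induction m with
  | zero => simp [physHermite_one]
  | succ m ih =>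
    rw [show 2 * (m + 1) + 1 = 2 * m + 1 + 2 by ring, coeff_zero_physHermite_add_two, ih, mul_zero]

lemma factorial_mul_coeff_one_physHermite_two_mul_add_one (m : ℕ) :
    (m.factorial : R) * (physHermite R (2 * m + 1)).coeff 1 =
      (-1) ^ m * 2 * (2 * m + 1).factorial := by
  rw [coeff_one_physHermite_succ, Nat.factorial_succ]
  push_cast
  linear_combination 2 * (2 * (m : R) + 1) * factorial_mul_coeff_zero_physHermite_two_mul R m

lemma coeff_one_physHermite_two_mul (m : ℕ) : (physHermite R (2 * m)).coeff 1 = 0 := by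
  cases m with
  | zero => simp [physHermite_zero, coeff_one]
  | succ m =>
    rw [show 2 * (m + 1) = 2 * m + 1 + 1 by ring, coeff_one_physHermite_succ,
      coeff_zero_physHermite_two_mul_add_one, mul_zero]

end PhysHermite

section Rodrigues

lemma iteratedDeriv_cexp_neg_sq (n : ℕ) :
    iteratedDeriv n (fun t : ℂ => Complex.exp (-t ^ 2)) =
      fun t => (-1) ^ n * (physHermite ℂ n).eval t * Complex.exp (-t ^ 2) := by
  induction n with
  | zero => simp [physHermite_zero]
  | succ n ih =>
    funext t
    have hexp : HasDerivAt (fun t : ℂ => Complex.exp (-t ^ 2))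
        (Complex.exp (-t ^ 2) * -(2 * t)) t := by
      simpa using (hasDerivAt_pow 2 t).fun_neg.cexp
    have hprod := (((physHermite ℂ n).hasDerivAt t).const_mul ((-1) ^ n)).fun_mul hexp
    rw [iteratedDeriv_succ, ih, hprod.deriv, physHermite_succ]
    simp only [eval_sub, eval_mul, eval_ofNat, eval_X]
    ring

lemma Hc_eq_eval_physHermite (n : ℕ) : Hc n = fun z => (physHermite ℂ n).eval z := by
  funext z
  have hexp : Complex.exp (z ^ 2) * Complex.exp (-z ^ 2) = 1 := by
    rw [← Complex.exp_add, add_neg_cancel, Complex.exp_zero]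
  have hsign : ((-1 : ℂ) ^ n) * (-1) ^ n = 1 := by rw [← mul_pow, neg_one_mul, neg_neg, one_pow]
  simp only [Hc, iteratedDeriv_cexp_neg_sq]
  linear_combination (physHermite ℂ n).eval z * (-1 : ℂ) ^ n * (-1) ^ n * hexp +
    (physHermite ℂ n).eval z * hsign

end Rodrigues

section Wronskian

variable {R : Type*} [CommRing R]

/-- The Wronskian of three polynomials, as a polynomial; this is the algebraic counterpart of `Wrc`,
whose coefficients can be extracted. -/
noncomputable def polyWronskian₃ (f g h : R[X]) : R[X] :=
  Matrix.det !![f, g, h;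
                derivative f, derivative g, derivative h;
                derivative (derivative f), derivative (derivative g), derivative (derivative h)]

lemma Wrc_eval (f g h : ℂ[X]) (z : ℂ) :
    Wrc (fun x => f.eval x) (fun x => g.eval x) (fun x => h.eval x) z =
      (polyWronskian₃ f g h).eval z := by
  have hderiv (p : ℂ[X]) : deriv (fun x => p.eval x) = fun x => p.derivative.eval x :=
    funext fun _ => p.deriv
  simp [Wrc, polyWronskian₃, hderiv, Matrix.det_fin_three]

lemma H1exc_eq_eval_polyWronskian₃ (n : ℕ) (z : ℂ) :
    H1exc n z =
      (polyWronskian₃ (physHermite ℂ 1) (physHermite ℂ 2) (physHermite ℂ n)).eval z := by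
  simp only [H1exc, Hc_eq_eval_physHermite, Wrc_eval]

lemma polyWronskian₃_physHermite_one_two (p : R[X]) :
    polyWronskian₃ (physHermite R 1) (physHermite R 2) p =
      16 * p - 16 * (X * derivative p) + (8 * X ^ 2 + 4) * derivative (derivative p) := by
  have hderiv_one : derivative (physHermite R 1) = 2 := by simp [physHermite_one]
  have hderiv_two : derivative (physHermite R 2) = 8 * X := by
    rw [derivative_physHermite_succ, physHermite_one]
    push_cast
    ring
  have hderiv_deriv_one : derivative (2 : R[X]) = 0 := derivative_ofNat 2
  have hderiv_deriv_two : derivative (8 * X : R[X]) = 8 := by simp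
  simp only [polyWronskian₃, Matrix.det_fin_three, Matrix.of_apply, Matrix.cons_val, hderiv_one,
    hderiv_two, hderiv_deriv_one, hderiv_deriv_two]
  rw [physHermite_one, physHermite_two]
  ring

lemma IsHermiteSolution.polyWronskian₃_eq {a : R} {p : R[X]} (hp : IsHermiteSolution a p) :
    polyWronskian₃ (physHermite R 1) (physHermite R 2) p =
      C (16 - 8 * a) * p - 16 * (X * derivative p) +
        8 * (X * derivative (X * derivative p)) := by
  rw [polyWronskian₃_physHermite_one_two, derivative_mul, derivative_X]
  simp only [C_sub, C_mul, map_ofNat]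
  rw [IsHermiteSolution] at hp
  linear_combination 4 * hp

lemma IsHermiteSolution.coeff_polyWronskian₃ {a : R} {p : R[X]} (hp : IsHermiteSolution a p)
    (i : ℕ) :
    (polyWronskian₃ (physHermite R 1) (physHermite R 2) p).coeff i =
      -8 * (a - (((i : R) - 1) ^ 2 + 1)) * p.coeff i := by
  simp only [hp.polyWronskian₃_eq, coeff_add, coeff_sub, coeff_C_mul, coeff_ofNat_mul,
    coeff_X_mul_derivative]
  ring

end Wronskian

section SeriesCoefficients

lemma factorial_cast_ne_zero {R : Type*} [Semiring R] [CharZero R] (n : ℕ) :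
    (n.factorial : R) ≠ 0 :=
  Nat.cast_ne_zero.mpr n.factorial_ne_zero

lemma prod_Icc_one_eq_prod_range {M : Type*} [CommMonoid M] (f : ℕ → M) (m : ℕ) :
    ∏ j ∈ Finset.Icc 1 m, f j = ∏ j ∈ Finset.range m, f (j + 1) := by
  rw [← Finset.Ico_add_one_right_eq_Icc, Finset.prod_Ico_eq_prod_range, Nat.add_sub_cancel]
  simp only [add_comm]

lemma ceven_zero (n : ℕ) : ceven n 0 = 1 := by simp [ceven]

lemma ceven_one (n : ℕ) : ceven n 1 = -n := by simp [ceven]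

lemma factorial_mul_ceven_add_two (n k : ℕ) :
    ((2 * (k + 2)).factorial : ℂ) * ceven n (k + 2) =
      (-2) ^ (k + 2) * n * (n - ((2 * (k + 2) - 1) ^ 2 + 1)) *
        ∏ j ∈ Finset.range k, ((n : ℂ) - 2 * (j + 2)) := by
  have hprod : ∏ j ∈ Finset.Icc 1 k, ((n : ℂ) - 2 * (1 + j)) =
      ∏ j ∈ Finset.range k, ((n : ℂ) - 2 * (j + 2)) := by
    rw [prod_Icc_one_eq_prod_range]
    exact Finset.prod_congr rfl fun j _ => by push_cast; ring
  rw [ceven, if_neg (by omega), if_neg (by omega), mul_div_cancel₀ _ (factorial_cast_ne_zero _),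
    Nat.add_sub_cancel, hprod, neg_pow 2]
  push_cast
  ring

lemma codd_one (n : ℕ) : codd n 1 = 1 := by simp [codd]

lemma factorial_mul_codd_add_two (n k : ℕ) :
    ((2 * k + 3).factorial : ℂ) * codd n (k + 2) =
      (-2) ^ (k + 1) * (n - ((2 * (k + 1)) ^ 2 + 1)) *
        ∏ j ∈ Finset.range k, ((n : ℂ) - (2 * (j + 1) + 1)) := by
  have hprod : ∏ j ∈ Finset.Icc 1 k, ((n : ℂ) - (2 * (1 + j) - 1)) =
      ∏ j ∈ Finset.range k, ((n : ℂ) - (2 * (j + 1) + 1)) := by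
    rw [prod_Icc_one_eq_prod_range]
    exact Finset.prod_congr rfl fun j _ => by push_cast; ring
  rw [codd, if_neg (by omega), show 2 * (k + 2) - 1 = 2 * k + 3 by omega,
    mul_div_cancel₀ _ (factorial_cast_ne_zero _), Nat.add_sub_cancel,
    show k + 2 - 1 = k + 1 by omega, hprod, neg_pow 2]
  push_cast
  ring

lemma factorial_mul_ceven (n k : ℕ) :
    ((2 * k).factorial : ℂ) * ((n - 2) * ceven n k) =
      (-2) ^ k * (∏ j ∈ Finset.range k, ((n : ℂ) - 2 * j)) * (n - ((2 * k - 1) ^ 2 + 1)) := by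
  rcases k with _ | _ | k
  · norm_num [ceven_zero]
  · simp only [zero_add, ceven_one, Finset.prod_range_one, mul_one, Nat.factorial_two]
    push_cast
    ring
  · rw [mul_left_comm, factorial_mul_ceven_add_two, Finset.prod_range_succ',
      Finset.prod_range_succ']
    push_cast
    simp only [add_assoc, one_add_one_eq_two]
    ring

lemma factorial_mul_codd (n k : ℕ) :
    ((2 * k + 1).factorial : ℂ) * ((n - 1) * codd n (k + 1)) =
      (-2) ^ k * (∏ j ∈ Finset.range k, ((n : ℂ) - (2 * j + 1))) * (n - ((2 * k) ^ 2 + 1)) := by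
  rcases k with _ | k
  · norm_num [codd_one]
  · rw [mul_left_comm, show 2 * (k + 1) + 1 = 2 * k + 3 by ring, factorial_mul_codd_add_two,
      Finset.prod_range_succ']
    push_cast
    ring

lemma coeff_two_mul_polyWronskian₃_physHermite (n k : ℕ) :
    (polyWronskian₃ (physHermite ℂ 1) (physHermite ℂ 2) (physHermite ℂ n)).coeff (2 * k) =
      -8 * (n - 2) * (physHermite ℂ n).coeff 0 * ceven n k := by
  have hsol := isHermiteSolution_physHermite ℂ n
  have hcoeff := hsol.factorial_mul_coeff 0 k
  rw [hsol.coeff_polyWronskian₃]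
  apply mul_left_cancel₀ (factorial_cast_ne_zero (2 * k))
  simp only [add_zero, Nat.cast_zero, Nat.factorial_zero, Nat.cast_one, one_mul] at hcoeff
  push_cast
  linear_combination -8 * ((n : ℂ) - ((2 * k - 1) ^ 2 + 1)) * hcoeff +
    8 * (physHermite ℂ n).coeff 0 * factorial_mul_ceven n k

lemma coeff_two_mul_add_one_polyWronskian₃_physHermite (n k : ℕ) :
    (polyWronskian₃ (physHermite ℂ 1) (physHermite ℂ 2) (physHermite ℂ n)).coeff (2 * k + 1) =
      -8 * (n - 1) * (physHermite ℂ n).coeff 1 * codd n (k + 1) := by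
  have hsol := isHermiteSolution_physHermite ℂ n
  have hcoeff := hsol.factorial_mul_coeff 1 k
  rw [hsol.coeff_polyWronskian₃]
  apply mul_left_cancel₀ (factorial_cast_ne_zero (2 * k + 1))
  simp only [Nat.cast_one, Nat.factorial_one, one_mul] at hcoeff
  push_cast
  linear_combination -8 * ((n : ℂ) - ((2 * k) ^ 2 + 1)) * hcoeff +
    8 * (physHermite ℂ n).coeff 1 * factorial_mul_codd n k

end SeriesCoefficients

section Expansion

lemma hasSum_coeff_mul_pow {R : Type*} [CommSemiring R] [TopologicalSpace R] (p : R[X]) (x : R) :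
    HasSum (fun i => p.coeff i * x ^ i) (p.eval x) := by
  rw [eval_eq_sum]
  refine hasSum_sum_of_ne_finset_zero fun i hi => ?_
  rw [notMem_support_iff.mp hi, zero_mul]

lemma eval_eq_tsum_even_add_tsum_odd {R : Type*} [CommSemiring R] [TopologicalSpace R]
    [ContinuousAdd R] [T2Space R] (p : R[X]) (x : R) :
    p.eval x = ∑' k, p.coeff (2 * k) * x ^ (2 * k) +
      ∑' k, p.coeff (2 * k + 1) * x ^ (2 * k + 1) := by
  have hsummable {e : ℕ → ℕ} (he : e.Injective) : Summable fun k => p.coeff (e k) * x ^ e k := by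
    refine summable_of_hasFiniteSupport ((p.support.finite_toSet.preimage he.injOn).subset ?_)
    exact fun k hk => mem_support_iff.mpr (left_ne_zero_of_mul hk)
  have htwo : Function.Injective fun k : ℕ => 2 * k := mul_right_injective₀ two_ne_zero
  rw [← (hasSum_coeff_mul_pow p x).tsum_eq]
  exact (tsum_even_add_odd (f := fun i => p.coeff i * x ^ i) (hsummable htwo)
    (hsummable (e := fun k => 2 * k + 1) ((add_left_injective 1).comp htwo))).symm

lemma H1exc_eq_muF_add_nuF (n : ℕ) (z : ℂ) :
    H1exc n z = -8 * (n - 2) * (physHermite ℂ n).coeff 0 * muF n z +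
      -8 * (n - 1) * (physHermite ℂ n).coeff 1 * nuF n z := by
  simp only [H1exc_eq_eval_polyWronskian₃, eval_eq_tsum_even_add_tsum_odd,
    coeff_two_mul_polyWronskian₃_physHermite, coeff_two_mul_add_one_polyWronskian₃_physHermite,
    mul_assoc _ (ceven n _), mul_assoc _ (codd n _), tsum_mul_left, muF, nuF]

lemma H1exc_two_mul_add_three (m : ℕ) (z : ℂ) :
    H1exc (2 * m + 3) z =
      (-1) ^ m * 32 * (2 * m + 3).factorial / m.factorial * nuF (2 * m + 3) z := by
  have hzero : (physHermite ℂ (2 * m + 3)).coeff 0 = 0 :=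
    coeff_zero_physHermite_two_mul_add_one ℂ (m + 1)
  have hone : ((m + 1).factorial : ℂ) * (physHermite ℂ (2 * m + 3)).coeff 1 =
      (-1) ^ (m + 1) * 2 * (2 * m + 3).factorial :=
    factorial_mul_coeff_one_physHermite_two_mul_add_one ℂ (m + 1)
  have hm_fact : (m.factorial : ℂ) ≠ 0 := factorial_cast_ne_zero m
  rw [Nat.factorial_succ m] at hone
  rw [H1exc_eq_muF_add_nuF, hzero]
  field_simp
  push_cast at hone ⊢
  linear_combination -16 * nuF (2 * m + 3) z * hone

lemma H1exc_two_mul_add_four (m : ℕ) (z : ℂ) :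
    H1exc (2 * m + 4) z =
      (-1) ^ (m + 1) * 16 * (2 * m + 4).factorial / ((m + 2) * m.factorial) *
        muF (2 * m + 4) z := by
  have hzero : ((m + 2).factorial : ℂ) * (physHermite ℂ (2 * m + 4)).coeff 0 =
      (-1) ^ (m + 2) * (2 * m + 4).factorial :=
    factorial_mul_coeff_zero_physHermite_two_mul ℂ (m + 2)
  have hone : (physHermite ℂ (2 * m + 4)).coeff 1 = 0 := coeff_one_physHermite_two_mul ℂ (m + 2)
  have hm_fact : (m.factorial : ℂ) ≠ 0 := factorial_cast_ne_zero m
  have hm_add_two : (m : ℂ) + 2 ≠ 0 := by exact_mod_cast (m + 1).succ_ne_zero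
  rw [Nat.factorial_succ (m + 1), Nat.factorial_succ m] at hzero
  rw [H1exc_eq_muF_add_nuF, hone]
  field_simp
  push_cast at hzero ⊢
  linear_combination -16 * muF (2 * m + 4) z * hzero

lemma H1exc_zero (z : ℂ) : H1exc 0 z = 16 * muF 0 z := by
  rw [H1exc_eq_muF_add_nuF, physHermite_zero, coeff_one_zero, coeff_one, if_neg one_ne_zero,
    Nat.cast_zero]
  ring

lemma prod_Icc_two_mul_add_four_sub {R : Type*} [CommRing R] (m : ℕ) :
    ∏ j ∈ Finset.Icc 1 m, (2 * (m : R) + 4 - 2 * (1 + j)) = 2 ^ m * m.factorial := by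
  have hfactorial : ∏ j ∈ Finset.range m, ((m : R) - j) = m.factorial := by
    rw [Finset.prod_range_natCast_sub, ← Nat.descFactorial_eq_prod_range, Nat.descFactorial_self]
  calc ∏ j ∈ Finset.Icc 1 m, (2 * (m : R) + 4 - 2 * (1 + j))
      = ∏ j ∈ Finset.range m, 2 * ((m : R) - j) := by
        rw [prod_Icc_one_eq_prod_range]
        exact Finset.prod_congr rfl fun j _ => by push_cast; ring
    _ = 2 ^ m * m.factorial := by
        rw [Finset.prod_mul_distrib, Finset.prod_const, Finset.card_range, hfactorial]

end Expansion

theorem stmt15 :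
    (∀ n : ℕ, Odd n → 3 ≤ n → ∀ z : ℂ,
      H1exc n z =
        ((-1) ^ ((n + 1) / 2) * 8 * (Nat.factorial n : ℂ) * 2 ^ ((n + 1) / 2) /
          ∏ j ∈ Finset.Icc 1 ((n - 3) / 2), ((n : ℂ) - 2 * (1 + (j : ℂ)) + 1)) * nuF n z) ∧
    (∀ n : ℕ, Even n → 4 ≤ n → ∀ z : ℂ,
      H1exc n z =
        ((-1) ^ ((n + 2) / 2) * 8 * (Nat.factorial n : ℂ) * 2 ^ (n / 2) /
          ((n : ℂ) * ∏ j ∈ Finset.Icc 1 ((n - 4) / 2), ((n : ℂ) - 2 * (1 + (j : ℂ))))) *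
            muF n z) ∧
    (∀ z : ℂ, H1exc 0 z = 16 * muF 0 z) := by
  refine ⟨?_, ?_, H1exc_zero⟩
  · intro n hodd hn z
    obtain ⟨m, rfl⟩ : ∃ m, n = 2 * m + 3 := ⟨(n - 3) / 2, by grind⟩
    have hprod : ∏ j ∈ Finset.Icc 1 m, (((2 * m + 3 : ℕ) : ℂ) - 2 * (1 + j) + 1) =
        2 ^ m * m.factorial := by
      rw [← prod_Icc_two_mul_add_four_sub]
      exact Finset.prod_congr rfl fun j _ => by push_cast; ring
    rw [H1exc_two_mul_add_three, show (2 * m + 3 + 1) / 2 = m + 2 by omega,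
      show (2 * m + 3 - 3) / 2 = m by omega, hprod]
    field_simp
    ring
  · intro n heven hn z
    obtain ⟨m, rfl⟩ : ∃ m, n = 2 * m + 4 := ⟨(n - 4) / 2, by grind⟩
    have hcast : ((2 * m + 4 : ℕ) : ℂ) = 2 * m + 4 := by push_cast; rfl
    rw [H1exc_two_mul_add_four, show (2 * m + 4 + 2) / 2 = m + 3 by omega,
      show (2 * m + 4) / 2 = m + 2 by omega, show (2 * m + 4 - 4) / 2 = m by omega,
      hcast, prod_Icc_two_mul_add_four_sub, show (2 : ℂ) * m + 4 = 2 * (m + 2) by ring]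
    field_simp
    ring
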